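/- Let α ∈ (1,2) and β > 0. There exists a constant C = C(α,β) > 0 such that |E_{α,β}(−μ)| ≤ C/(1+μ) for every μ ≥ 0. -/

import Mathlib

/-- The Mittag-Leffler function of real parameters `α, β > 0` at a real argument:
`E_{α,β}(x) = Σ_{k=0}^∞ x^k / Γ(αk + β)`. -/
noncomputable def mittagLeffler (α β x : ℝ) : ℝ :=
  ∑' k : ℕ, x ^ k / Real.Gamma (α * k + β)

open MeasureTheory Filter Topology

noncomputable def cML (α β : ℝ) (z : ℂ) : ℂ :=
  ∑' k : ℕ, z ^ k / ((Real.Gamma (α * k + β) : ℝ) : ℂ)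

lemma ml_summable (α β : ℝ) (hα1 : 1 < α) (r : ℝ) (hr : 0 ≤ r) :
    Summable (fun k : ℕ => r ^ k / |Real.Gamma (α * k + β)|) := by
  refine Summable.of_norm_bounded_eventually_nat (Real.summable_pow_div_factorial r) ?_
  have h1 : ∀ᶠ k : ℕ in atTop, (1 - β) / (α - 1) ≤ (k : ℝ) :=
    tendsto_natCast_atTop_atTop.eventually_ge_atTop _
  filter_upwards [h1, eventually_ge_atTop 1] with k hk hk1
  have hk1' : (1:ℝ) ≤ k := by exact_mod_cast hk1
  rw [div_le_iff₀ (by linarith)] at hk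
  have h2 : (k.factorial : ℝ) ≤ Real.Gamma (α * k + β) := by
    rw [← Real.Gamma_nat_eq_factorial]
    exact Real.Gamma_strictMonoOn_Ici.monotoneOn (by simp; linarith) (by simp; nlinarith)
      (by nlinarith)
  have h3 : (0:ℝ) < k.factorial := by positivity
  rw [Real.norm_of_nonneg (by positivity), abs_of_pos (h3.trans_le h2)]
  gcongr

lemma cML_term_le (α β : ℝ) (R : ℝ) (z : ℂ) (hz : ‖z‖ ≤ R) (k : ℕ) :
    ‖z ^ k / ((Real.Gamma (α * k + β) : ℝ) : ℂ)‖ ≤ R ^ k / |Real.Gamma (α * k + β)| := by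
  rw [norm_div, norm_pow, Complex.norm_real, Real.norm_eq_abs]
  gcongr

lemma cML_differentiable (α β : ℝ) (hα1 : 1 < α) : Differentiable ℂ (cML α β) := by
  intro z
  have := Complex.differentiableOn_tsum_of_summable_norm (U := Metric.ball 0 (‖z‖ + 1))
    (F := fun (k : ℕ) (w : ℂ) => w ^ k / ((Real.Gamma (α * k + β) : ℝ) : ℂ))
    (ml_summable α β hα1 (‖z‖ + 1) (by positivity)) (fun i => by fun_prop) Metric.isOpen_ball
    (fun i w hw => cML_term_le α β _ w (by simpa using (Metric.mem_ball.1 hw).le) i)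
  exact (this z (by simp)).differentiableAt (Metric.isOpen_ball.mem_nhds (by simp))

lemma cML_hasSum (α β : ℝ) (hα1 : 1 < α) (z : ℂ) :
    HasSum (fun k : ℕ => z ^ k / ((Real.Gamma (α * k + β) : ℝ) : ℂ)) (cML α β z) :=
  (Summable.of_norm_bounded (ml_summable α β hα1 ‖z‖ (norm_nonneg _))
    (fun k => cML_term_le α β _ z le_rfl k)).hasSum

lemma cML_rec (α β : ℝ) (hα1 : 1 < α) (hβ : 0 < β) (z : ℂ) :
    cML α β z = β * cML α (β + 1) z + α * (z * deriv (cML α (β + 1)) z) := by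
  have h1 := Complex.hasSum_deriv_of_summable_norm (U := Metric.ball 0 (‖z‖ + 1)) (z := z)
    (F := fun (k : ℕ) (w : ℂ) => w ^ k / ((Real.Gamma (α * k + (β + 1)) : ℝ) : ℂ))
    (ml_summable α (β + 1) hα1 (‖z‖ + 1) (by positivity)) (fun i => by fun_prop) Metric.isOpen_ball
    (fun i w hw => cML_term_le α (β + 1) _ w (by simpa using (Metric.mem_ball.1 hw).le) i)
    (by simp)
  have h2 := (((cML_hasSum α (β + 1) hα1 z).mul_left (β : ℂ)).add
    ((h1.mul_left z).mul_left (α : ℂ)))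
  refine (cML_hasSum α β hα1 z).unique ?_
  refine Eq.mpr (congrArg (fun f => HasSum f _) (funext fun k => ?_)) h2
  have hp : 0 < α * (k : ℝ) + β := by positivity
  have hG : Real.Gamma (α * k + (β + 1)) = (α * k + β) * Real.Gamma (α * k + β) := by
    rw [← add_assoc, Real.Gamma_add_one hp.ne']
  have hg := (Real.Gamma_pos_of_pos hp).ne'
  have e1 : ((α : ℂ) * k + β) ≠ 0 := by exact_mod_cast hp.ne'
  have e2 : ((Real.Gamma (α * k + β) : ℝ) : ℂ) ≠ 0 := by exact_mod_cast hg
  rw [hG]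
  simp only [deriv_div_const, deriv_pow_field]
  push_cast
  have hk : z * (k * z ^ (k - 1)) = k * z ^ k := by
    cases k with
    | zero => simp
    | succ n => simp; ring
  rw [← mul_div_assoc z, hk]
  field_simp
  ring

/-- property of decay in a sector -/
def SecDecay (α β : ℝ) : Prop :=
  ∃ d : ℝ, 0 < d ∧ d ≤ 1 ∧ ∃ C : ℝ, 0 ≤ C ∧ ∀ z : ℂ, |z.im| < d * z.re →
    ‖cML α β (-z)‖ ≤ C / z.re

lemma secDecay_step (α β : ℝ) (hα1 : 1 < α) (hβ : 0 < β) (h : SecDecay α (β + 1)) :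
    SecDecay α β := by
  obtain ⟨d, hd, hd1, C, hC, H⟩ := h
  refine ⟨d / 4, by positivity, by linarith, β * C + α * (2 * (4 * C / 3 / (d / 4))),
    by positivity, fun z hz => ?_⟩
  have hx : 0 < z.re := by
    have := abs_nonneg z.im
    by_contra hc
    nlinarith
  have hz2 : ‖z‖ ≤ 2 * z.re := by
    have := Complex.norm_le_abs_re_add_abs_im z
    rw [abs_of_pos hx] at this
    nlinarith
  have hr : 0 < d / 4 * z.re := by positivity
  have hder : ‖deriv (cML α (β + 1)) (-z)‖ ≤ (C / (3 / 4 * z.re)) / (d / 4 * z.re) := by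
    refine Complex.norm_deriv_le_of_forall_mem_sphere_norm_le hr
      (cML_differentiable α (β + 1) hα1).diffContOnCl ?_
    intro u hu
    rw [mem_sphere_iff_norm] at hu
    have hre := Complex.abs_re_le_norm (u - -z)
    have him := Complex.abs_im_le_norm (u - -z)
    rw [hu, abs_le] at hre him
    simp at hre him
    have hz' := abs_lt.1 hz
    have h3 : 3 / 4 * z.re ≤ (-u).re := by simp; nlinarith
    have h4 : |(-u).im| < d * (-u).re := by
      rw [abs_lt]; simp at h3 ⊢; constructor <;> nlinarith
    have := H (-u) h4
    rw [neg_neg] at this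
    exact this.trans (by gcongr)
  have h0 : ‖cML α (β + 1) (-z)‖ ≤ C / z.re := H z (hz.trans_le (by nlinarith))
  rw [cML_rec α β hα1 hβ]
  calc _ ≤ β * ‖cML α (β + 1) (-z)‖ + α * (‖z‖ * ‖deriv (cML α (β + 1)) (-z)‖) := by
        refine (norm_add_le _ _).trans ?_
        simp [abs_of_pos hβ, abs_of_pos (show 0 < α by linarith)]
    _ ≤ β * (C / z.re) + α * ((2 * z.re) * ((C / (3 / 4 * z.re)) / (d / 4 * z.re))) := by
        gcongr
    _ = _ := by field_simp

lemma secDecay_of_large (α β : ℝ) (hα1 : 1 < α) (hβ : 0 < β)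
    (h : ∀ b, α + 1 < b → SecDecay α b) : SecDecay α β := by
  obtain ⟨n, hn⟩ := exists_nat_gt (α + 1)
  have : ∀ m : ℕ, SecDecay α (β + m) → SecDecay α β := by
    intro m
    induction m with
    | zero => simp
    | succ m ih =>
      intro hm
      apply ih
      apply secDecay_step α _ hα1 (by positivity)
      convert hm using 1
      push_cast; ring
  exact this n (h _ (by linarith))

lemma final_of_secDecay (α β : ℝ) (hα1 : 1 < α) (h : SecDecay α β) :
    ∃ C > 0, ∀ μ : ℝ, 0 ≤ μ → |∑' k : ℕ, (-μ) ^ k / Real.Gamma (α * k + β)| ≤ C / (1 + μ) := by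
  obtain ⟨d, hd, hd1, C, hC, H⟩ := h
  obtain ⟨B, hB⟩ := (isCompact_closedBall (0:ℂ) 1).exists_bound_of_continuousOn
    (cML_differentiable α β hα1).continuous.continuousOn
  refine ⟨2 * C + 2 * |B| + 1, by positivity, fun μ hμ => ?_⟩
  have e : ((∑' k : ℕ, (-μ) ^ k / Real.Gamma (α * k + β) : ℝ) : ℂ) = cML α β (-(μ : ℂ)) := by
    rw [cML, Complex.ofReal_tsum]
    push_cast
    rfl
  rw [← Real.norm_eq_abs, ← Complex.norm_real, e, le_div_iff₀ (by linarith)]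
  rcases le_total μ 1 with h1 | h1
  · have := hB (-(μ:ℂ)) (by simp [abs_of_nonneg hμ, h1])
    have := le_abs_self B
    nlinarith [norm_nonneg (cML α β (-(μ : ℂ)))]
  · have := H (μ : ℂ) (by simp; positivity)
    rw [Complex.ofReal_re, le_div_iff₀ (by linarith)] at this
    nlinarith [norm_nonneg (cML α β (-(μ : ℂ))), abs_nonneg B]

lemma holo_int {μ : Measure ℝ} {U : Set ℂ} (hU : IsOpen U) (F : ℂ → ℝ → ℂ) (bound : ℝ → ℝ)
    (hm : ∀ z ∈ U, AEStronglyMeasurable (F z) μ)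
    (hd : ∀ᵐ a ∂μ, DifferentiableOn ℂ (fun z => F z a) U)
    (hi : Integrable bound μ)
    (hb : ∀ᵐ a ∂μ, ∀ z ∈ U, ‖F z a‖ ≤ bound a) :
    DifferentiableOn ℂ (fun z => ∫ a, F z a ∂μ) U := by
  intro z hz
  obtain ⟨r, hr, hball⟩ := Metric.isOpen_iff.1 hU z hz
  have hin : ∀ x ∈ Metric.ball z (r / 2), Metric.closedBall x (r / 4) ⊆ U := by
    intro x hx y hy
    apply hball
    rw [Metric.mem_ball] at *
    rw [Metric.mem_closedBall] at hy
    linarith [dist_triangle y x z]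
  refine (hasDerivAt_integral_of_dominated_loc_of_deriv_le (F' := fun x a => deriv (fun z => F z a) x)
    (bound := fun a => bound a / (r / 4)) (Metric.ball_mem_nhds z (half_pos hr)) ?_ ?_ ?_ ?_ ?_
    ?_).2.differentiableAt.differentiableWithinAt
  · filter_upwards [hU.mem_nhds hz] with x hx using hm x hx
  · refine hi.mono' (hm z hz) ?_
    filter_upwards [hb] with a ha using ha z hz
  · have hlim : Tendsto (fun n : ℕ => z + ((r / 2) / ((n : ℝ) + 1) : ℝ)) atTop (𝓝[≠] z) := by
      rw [tendsto_nhdsWithin_iff]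
      constructor
      · have h1 := (tendsto_one_div_add_atTop_nhds_zero_nat (𝕜 := ℝ)).const_mul (r / 2)
        have h2 := (Complex.continuous_ofReal.tendsto _).comp h1
        have := h2.const_add z
        simpa [div_eq_mul_inv] using this
      · refine Eventually.of_forall fun n => ?_
        simp only [Set.mem_compl_iff, Set.mem_singleton_iff, add_eq_left, Complex.ofReal_eq_zero]
        positivity
    refine aestronglyMeasurable_of_tendsto_ae atTop
      (f := fun (n : ℕ) a => slope (fun z => F z a) z (z + ((r / 2) / ((n : ℝ) + 1) : ℝ))) ?_ ?_
    · intro n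
      simp only [slope_def_field, div_eq_mul_inv _ (_ - _)]
      have hmem : (z + ((r / 2) / ((n : ℝ) + 1) : ℝ)) ∈ U := by
        apply hball
        rw [Metric.mem_ball, dist_eq_norm, add_sub_cancel_left, Complex.norm_real,
          Real.norm_of_nonneg (by positivity)]
        have : (r / 2) / ((n : ℝ) + 1) ≤ r / 2 := div_le_self (by positivity) (by linarith [(Nat.cast_nonneg n : (0:ℝ) ≤ n)])
        linarith
      exact ((hm _ hmem).sub (hm z hz)).mul_const _
    · filter_upwards [hd] with a ha
      have := ((ha z hz).differentiableAt (hU.mem_nhds hz)).hasDerivAt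
      rw [hasDerivAt_iff_tendsto_slope] at this
      exact this.comp hlim
  · filter_upwards [hd, hb] with a ha hba x hx
    refine Complex.norm_deriv_le_of_forall_mem_sphere_norm_le (by positivity) ?_ ?_
    · exact (ha.mono (hin x hx)).diffContOnCl_ball subset_rfl
    · intro y hy
      exact hba y (hin x hx (Metric.sphere_subset_closedBall hy))
  · exact hi.div_const _
  · filter_upwards [hd] with a ha x hx
    have hxU : x ∈ U := hin x hx (Metric.mem_closedBall_self (by positivity))
    exact ((ha x hxU).differentiableAt (hU.mem_nhds hxU)).hasDerivAt

lemma gamma_int_complex (b : ℝ) (hb : 1 < b) (s : ℂ) (hs : 1 / 2 < s.re) :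
    ∫ t in Set.Ioi (0:ℝ), (t : ℂ) ^ ((b : ℂ) - 1) * Complex.exp (-(s * t)) =
      s ^ (-(b : ℂ)) * Real.Gamma b := by
  have hU : IsOpen {s : ℂ | 1 / 2 < s.re} := isOpen_lt continuous_const Complex.continuous_re
  have hpre : IsPreconnected {s : ℂ | 1 / 2 < s.re} := (convex_halfSpace_re_gt _).isPreconnected
  have hint : IntegrableOn (fun t : ℝ => t ^ (b - 1) * Real.exp (-(1 / 2 * t))) (Set.Ioi 0) := by
    refine .of_integral_ne_zero ?_
    rw [Real.integral_rpow_mul_exp_neg_mul_Ioi (by linarith) (by norm_num)]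
    have := Real.Gamma_pos_of_pos (show 0 < b by linarith)
    positivity
  have h1 : DifferentiableOn ℂ (fun s : ℂ =>
      ∫ t in Set.Ioi (0:ℝ), (t : ℂ) ^ ((b : ℂ) - 1) * Complex.exp (-(s * t)))
      {s : ℂ | 1 / 2 < s.re} := by
    refine holo_int hU (fun s t => (t : ℂ) ^ ((b : ℂ) - 1) * Complex.exp (-(s * t))) _ ?_ ?_ hint ?_
    · intro z hz
      refine ContinuousOn.aestronglyMeasurable ?_ measurableSet_Ioi
      refine ContinuousOn.mul ?_ (by fun_prop)
      intro t ht
      exact (Complex.continuousAt_ofReal_cpow_const _ _ (Or.inr (ne_of_gt ht))).continuousWithinAt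
    · refine Eventually.of_forall fun t => ?_
      fun_prop
    · filter_upwards [ae_restrict_mem measurableSet_Ioi] with t ht z hz
      rw [Set.mem_Ioi] at ht
      rw [norm_mul, Complex.norm_cpow_eq_rpow_re_of_pos ht, Complex.norm_exp]
      simp only [Complex.sub_re, Complex.ofReal_re, Complex.one_re, Complex.neg_re, Complex.mul_re,
        Complex.ofReal_im, mul_zero, sub_zero]
      have hz' : 1 / 2 < z.re := hz
      gcongr
  have h2 : DifferentiableOn ℂ (fun s : ℂ => s ^ (-(b : ℂ)) * Real.Gamma b)
      {s : ℂ | 1 / 2 < s.re} := by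
    intro z hz
    have hz' : 1 / 2 < z.re := hz
    refine DifferentiableAt.differentiableWithinAt ?_
    refine (DifferentiableAt.cpow_const differentiableAt_id ?_).mul_const _
    exact Or.inl (by simp; linarith)
  refine (h1.analyticOnNhd hU).eqOn_of_preconnected_of_frequently_eq (h2.analyticOnNhd hU) hpre
    (z₀ := 1) (by norm_num) ?_ hs
  have hlim : Tendsto (fun n : ℕ => (1:ℂ) + (1 / ((n : ℝ) + 1) : ℝ)) atTop (𝓝[≠] 1) := by
    rw [tendsto_nhdsWithin_iff]
    constructor
    · have h1 := (tendsto_one_div_add_atTop_nhds_zero_nat (𝕜 := ℝ))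
      have h2 := (Complex.continuous_ofReal.tendsto _).comp h1
      have := h2.const_add (1:ℂ)
      simpa [div_eq_mul_inv] using this
    · refine Eventually.of_forall fun n => ?_
      simp only [Set.mem_compl_iff, Set.mem_singleton_iff, add_eq_left, Complex.ofReal_eq_zero]
      positivity
  refine hlim.frequently (Frequently.of_forall fun n => ?_)
  have hr : (0:ℝ) < 1 + 1 / ((n : ℝ) + 1) := by positivity
  have := Complex.integral_cpow_mul_exp_neg_mul_Ioi (a := b) (by simp; linarith) hr
  rw [Complex.Gamma_ofReal] at this
  have e : (1:ℂ) + (1 / ((n : ℝ) + 1) : ℝ) = ((1 + 1 / ((n : ℝ) + 1) : ℝ) : ℂ) := by push_cast; rfl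
  rw [e, this, one_div, Complex.inv_cpow, Complex.cpow_neg]
  rw [Complex.arg_ofReal_of_nonneg hr.le]
  exact Real.pi_pos.ne

/-- the vertical line -/
noncomputable def wl (x : ℝ) : ℂ := 1 + (2 * Real.pi * x : ℝ) * Complex.I

lemma wl_re (x : ℝ) : (wl x).re = 1 := by simp [wl]
lemma wl_ne (x : ℝ) : wl x ≠ 0 := fun h => by simpa [h] using wl_re x
lemma wl_cont : Continuous wl := by unfold wl; fun_prop
lemma wl_slit (x : ℝ) : wl x ∈ Complex.slitPlane := Or.inl (by rw [wl_re]; norm_num)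

lemma wl_norm_one (x : ℝ) : 1 ≤ ‖wl x‖ := by
  have := Complex.abs_re_le_norm (wl x)
  rw [wl_re] at this; simpa using this

lemma wl_norm (x : ℝ) : (1 + ‖x‖) / 2 ≤ ‖wl x‖ := by
  have h1 := wl_norm_one x
  have h2 := Complex.abs_im_le_norm (wl x)
  have h3 : (wl x).im = 2 * Real.pi * x := by simp [wl]
  rw [h3, abs_mul, abs_of_pos (by positivity)] at h2
  rw [Real.norm_eq_abs]
  nlinarith [Real.pi_gt_three, abs_nonneg x]

lemma wl_integrable (b : ℝ) (hb : 1 < b) : Integrable (fun x => ‖wl x‖ ^ (-b)) := by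
  have h := (integrable_one_add_norm (E := ℝ) (μ := volume) (r := b) (by simpa using hb)).const_mul
    ((1 / 2 : ℝ) ^ (-b))
  refine h.mono' ?_ ?_
  · refine Continuous.aestronglyMeasurable ?_
    exact wl_cont.norm.rpow_const fun x => Or.inl (norm_ne_zero_iff.2 (wl_ne x))
  · refine Eventually.of_forall fun x => ?_
    rw [Real.norm_of_nonneg (by positivity), ← Real.mul_rpow (by positivity) (by positivity)]
    refine Real.rpow_le_rpow_of_nonpos (by positivity) ?_ (by linarith)
    linarith [wl_norm x]

lemma wl_cpow_cont (c : ℂ) : Continuous (fun x => wl x ^ c) :=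
  continuous_iff_continuousAt.2 fun x =>
    ContinuousAt.cpow wl_cont.continuousAt continuousAt_const (wl_slit x)

lemma inv_gamma (b : ℝ) (hb : 1 < b) :
    ∫ x, Complex.exp (wl x) * wl x ^ (-(b : ℂ)) = 1 / (Real.Gamma b : ℂ) := by
  have hg : (Real.Gamma b : ℂ) ≠ 0 := by
    exact_mod_cast (Real.Gamma_pos_of_pos (show 0 < b by linarith)).ne'
  set f : ℝ → ℂ := (Set.Ioi (0:ℝ)).indicator
    (fun t => (t : ℂ) ^ ((b : ℂ) - 1) * Complex.exp (-(1 * t))) with hf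
  have hint : Integrable f := by
    rw [hf, integrable_indicator_iff measurableSet_Ioi]
    refine .of_integral_ne_zero ?_
    rw [gamma_int_complex b hb 1 (by norm_num)]
    simpa using hg
  have hF : FourierTransform.fourier f = fun x : ℝ => wl x ^ (-(b : ℂ)) * Real.Gamma b := by
    ext x
    rw [← gamma_int_complex b hb (wl x) (by rw [wl_re]; norm_num),
      Real.fourier_real_eq_integral_exp_smul, ← integral_indicator measurableSet_Ioi]
    congr 1
    ext t
    by_cases ht : t ∈ Set.Ioi (0:ℝ)
    · simp only [hf, Set.indicator_of_mem ht, smul_eq_mul]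
      rw [mul_left_comm, ← Complex.exp_add]
      congr 2
      simp only [wl]
      push_cast; ring
    · simp [hf, Set.indicator_of_notMem ht]
  have hFi : Integrable (FourierTransform.fourier f) := by
    rw [hF]
    refine Integrable.mul_const ?_ _
    refine (wl_integrable b hb).mono' (wl_cpow_cont _).aestronglyMeasurable ?_
    refine Eventually.of_forall fun x => ?_
    rw [← Complex.ofReal_neg, Complex.norm_cpow_real]
  have hc : ContinuousAt f 1 := by
    have : f =ᶠ[𝓝 1] (fun t : ℝ => (t : ℂ) ^ ((b : ℂ) - 1) * Complex.exp (-(1 * t))) := by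
      filter_upwards [Ioi_mem_nhds (show (0:ℝ) < 1 by norm_num)] with t ht
      simp only [hf, Set.indicator_of_mem ht]
    refine ContinuousAt.congr ?_ this.symm
    exact (Complex.continuousAt_ofReal_cpow_const _ _ (Or.inr one_ne_zero)).mul (by fun_prop)
  have key := hint.fourierInv_fourier_eq hFi hc
  rw [Real.fourierInv_eq', hF] at key
  have hf1 : f 1 = Complex.exp (-1) := by simp [hf]
  rw [hf1] at key
  have e : ∀ x : ℝ, Complex.exp (wl x) * wl x ^ (-(b : ℂ)) = (Complex.exp 1 / Real.Gamma b) *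
      (Complex.exp (((2 * Real.pi * inner ℝ x 1 : ℝ) : ℂ) * Complex.I) •
        (wl x ^ (-(b : ℂ)) * Real.Gamma b)) := by
    intro x
    have : Complex.exp (wl x) = Complex.exp 1 *
      Complex.exp (((2 * Real.pi * inner ℝ x 1 : ℝ) : ℂ) * Complex.I) := by
      rw [← Complex.exp_add]; simp [wl]
    rw [this, smul_eq_mul]
    field_simp
  simp_rw [e]
  rw [integral_const_mul, key, div_mul_eq_mul_div, ← Complex.exp_add]
  simp

lemma wl_sector (α : ℝ) (hα1 : 1 < α) (hα2 : α < 2) :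
    ∃ c : ℝ, 0 ≤ c ∧ c < 1 ∧ ∀ x, -c * ‖wl x ^ (-(α : ℂ))‖ ≤ (wl x ^ (-(α : ℂ))).re := by
  have hpi := Real.pi_pos
  refine ⟨-Real.cos (α * (Real.pi / 2)), ?_, ?_, fun x => ?_⟩
  · have := Real.cos_nonpos_of_pi_div_two_le_of_le (x := α * (Real.pi / 2)) (by nlinarith)
      (by nlinarith)
    linarith
  · have := Real.cos_lt_cos_of_nonneg_of_le_pi (x := α * (Real.pi / 2)) (y := Real.pi)
      (by positivity) le_rfl (by nlinarith)
    rw [Real.cos_pi] at this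
    linarith
  · rw [neg_neg, Complex.cpow_def_of_ne_zero (wl_ne x), Complex.norm_exp, Complex.exp_re, mul_comm]
    refine mul_le_mul_of_nonneg_left ?_ (Real.exp_pos _).le
    have him : (Complex.log (wl x) * -(α : ℂ)).im = -(α * (wl x).arg) := by
      simp [Complex.log_im]; ring
    have harg : |(wl x).arg| ≤ Real.pi / 2 := Complex.abs_arg_le_pi_div_two_iff.2
      (by rw [wl_re]; norm_num)
    rw [him, Real.cos_neg, ← Real.cos_abs (α * (wl x).arg), abs_mul, abs_of_pos (by linarith : 0 < α)]
    refine Real.cos_le_cos_of_nonneg_of_le_pi (by positivity) (by nlinarith) ?_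
    gcongr

lemma sector_bound (c : ℝ) (hc0 : 0 ≤ c) (hc1 : c < 1) (q z : ℂ) (hq : -c * ‖q‖ ≤ q.re)
    (hz : |z.im| < (1 - c) / 4 * z.re) :
    (1 - c) / 4 * (1 + z.re * ‖q‖) ≤ ‖1 + z * q‖ := by
  have hx : 0 < z.re := by
    have := abs_nonneg z.im
    by_contra hc
    nlinarith
  have h1 : (1 - c) / 2 * (1 + z.re * ‖q‖) ≤ ‖1 + (z.re : ℂ) * q‖ := by
    refine le_of_sq_le_sq ?_ (norm_nonneg _)
    rw [Complex.sq_norm (1 + _), Complex.normSq_apply]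
    have hn : ‖q‖ ^ 2 = q.re * q.re + q.im * q.im := by
      rw [Complex.sq_norm, Complex.normSq_apply]
    simp only [Complex.add_re, Complex.one_re, Complex.mul_re, Complex.ofReal_re,
      Complex.ofReal_im, zero_mul, sub_zero, Complex.add_im, Complex.one_im, Complex.mul_im,
      add_zero, zero_add]
    have e : (1 + z.re * q.re) * (1 + z.re * q.re) + z.re * q.im * (z.re * q.im)
      = 1 + 2 * (z.re * q.re) + (z.re * ‖q‖) ^ 2 := by
      rw [mul_pow, hn]; ring
    rw [e]
    have h3 : -c * (z.re * ‖q‖) ≤ z.re * q.re := by nlinarith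
    have h4 : 0 ≤ z.re * ‖q‖ := by positivity
    generalize z.re * ‖q‖ = r at h3 h4
    have h5 : ((1 - c) / 2 * (1 + r)) ^ 2 ≤ (1 - c) / 2 * (1 + r) ^ 2 := by
      rw [mul_pow]
      gcongr
      nlinarith
    nlinarith [mul_nonneg (by linarith : (0:ℝ) ≤ 1 + c) (sq_nonneg (1 - r))]
  have h2 : ‖1 + (z.re : ℂ) * q‖ ≤ ‖1 + z * q‖ + |z.im| * ‖q‖ := by
    have e : 1 + (z.re : ℂ) * q = (1 + z * q) - (z.im * Complex.I) * q := by
      nth_rewrite 2 [← Complex.re_add_im z]; ring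
    rw [e]
    refine (norm_sub_le _ _).trans ?_
    simp
  have h3 : |z.im| * ‖q‖ ≤ (1 - c) / 4 * z.re * ‖q‖ := by gcongr
  nlinarith [norm_nonneg q]

lemma wl_exp_norm (x : ℝ) : ‖Complex.exp (wl x)‖ = Real.exp 1 := by
  rw [Complex.norm_exp, wl_re]

lemma cML_rep_small (α β : ℝ) (hα1 : 1 < α) (hβ : 1 < β) (z : ℂ) (hz : ‖z‖ < 1) :
    ∫ x, Complex.exp (wl x) * wl x ^ (-(β : ℂ)) / (1 + z * wl x ^ (-(α : ℂ))) = cML α β (-z) := by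
  have hterm : ∀ (k : ℕ) (x : ℝ), Complex.exp (wl x) * wl x ^ (-(β : ℂ)) *
      (-(z * wl x ^ (-(α : ℂ)))) ^ k =
      (-z) ^ k * (Complex.exp (wl x) * wl x ^ (-((α * k + β : ℝ) : ℂ))) := by
    intro k x
    have : wl x ^ (-((α * k + β : ℝ) : ℂ)) = (wl x ^ (-(α : ℂ))) ^ k * wl x ^ (-(β : ℂ)) := by
      rw [← Complex.cpow_nat_mul, ← Complex.cpow_add _ _ (wl_ne x)]
      congr 1; push_cast; ring
    rw [this, ← neg_mul, mul_pow]; ring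
  have hq : ∀ x, ‖wl x ^ (-(α : ℂ))‖ ≤ 1 := by
    intro x
    rw [← Complex.ofReal_neg, Complex.norm_cpow_real]
    exact Real.rpow_le_one_of_one_le_of_nonpos (wl_norm_one x) (by linarith)
  have hbd : ∀ (k : ℕ) (x : ℝ), ‖Complex.exp (wl x) * wl x ^ (-(β : ℂ)) *
      (-(z * wl x ^ (-(α : ℂ)))) ^ k‖ ≤ ‖z‖ ^ k * (Real.exp 1 * ‖wl x‖ ^ (-β)) := by
    intro k x
    rw [norm_mul, norm_mul, wl_exp_norm, ← Complex.ofReal_neg, Complex.norm_cpow_real, norm_pow,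
      norm_neg, norm_mul, mul_comm]
    gcongr
    exact mul_le_of_le_one_right (norm_nonneg _) (hq x)
  have hbi := (wl_integrable β hβ).const_mul (Real.exp 1)
  have hInt : ∀ k : ℕ, Integrable (fun x => Complex.exp (wl x) * wl x ^ (-(β : ℂ)) *
      (-(z * wl x ^ (-(α : ℂ)))) ^ k) := by
    intro k
    refine (hbi.const_mul (‖z‖ ^ k)).mono' ?_ (Eventually.of_forall (hbd k))
    refine Continuous.aestronglyMeasurable ?_
    have h1 := wl_cpow_cont (-(β : ℂ))
    have h2 := wl_cpow_cont (-(α : ℂ))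
    have h3 := wl_cont
    fun_prop
  have hsum : Summable fun k : ℕ => ∫ x, ‖Complex.exp (wl x) * wl x ^ (-(β : ℂ)) *
      (-(z * wl x ^ (-(α : ℂ)))) ^ k‖ := by
    refine Summable.of_nonneg_of_le (fun k => integral_nonneg fun x => norm_nonneg _) (fun k => ?_)
      ((summable_geometric_of_lt_one (norm_nonneg z) hz).mul_right
        (∫ x, Real.exp 1 * ‖wl x‖ ^ (-β)))
    rw [← integral_const_mul]
    exact integral_mono (hInt k).norm (hbi.const_mul _) (hbd k)
  have hs := hasSum_integral_of_summable_integral_norm hInt hsum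
  have e1 : ∀ k : ℕ, ∫ x, Complex.exp (wl x) * wl x ^ (-(β : ℂ)) *
      (-(z * wl x ^ (-(α : ℂ)))) ^ k = (-z) ^ k / ((Real.Gamma (α * k + β) : ℝ) : ℂ) := by
    intro k
    simp_rw [hterm k]
    rw [integral_const_mul, inv_gamma _ (by nlinarith [(Nat.cast_nonneg k : (0:ℝ) ≤ k)]),
      mul_one_div]
  simp_rw [e1] at hs
  rw [← hs.unique (cML_hasSum α β hα1 (-z))]
  congr 1
  ext x
  rw [tsum_mul_left, tsum_geometric_of_norm_lt_one, sub_neg_eq_add, div_eq_mul_inv]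
  rw [norm_neg, norm_mul]
  exact (mul_le_of_le_one_right (norm_nonneg _) (hq x)).trans_lt hz

lemma secDecay_large (α b : ℝ) (hα1 : 1 < α) (hα2 : α < 2) (hb : α + 1 < b) : SecDecay α b := by
  obtain ⟨c, hc0, hc1, hc⟩ := wl_sector α hα1 hα2
  have hd : 0 < (1 - c) / 4 := by linarith
  set d := (1 - c) / 4 with hdd
  set U : Set ℂ := {z | |z.im| < d * z.re} with hUdef
  have hU : IsOpen U := isOpen_lt (by fun_prop) (by fun_prop)
  have hconv : Convex ℝ U := by
    intro x hx y hy s t hs ht hst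
    have hx' : |x.im| < d * x.re := hx
    have hy' : |y.im| < d * y.re := hy
    change |(s • x + t • y).im| < d * (s • x + t • y).re
    simp only [Complex.add_im, Complex.smul_im, Complex.add_re, Complex.smul_re, smul_eq_mul]
    rw [abs_lt] at hx' hy' ⊢
    rcases hs.eq_or_lt with rfl | hs'
    · have : t = 1 := by linarith
      subst this
      constructor <;> linarith
    · constructor <;> nlinarith
  have hpos : ∀ z ∈ U, 0 < z.re := by
    intro z hz
    have hz' : |z.im| < d * z.re := hz
    have := abs_nonneg z.im
    by_contra hcc
    nlinarith
  have hlow : ∀ z ∈ U, ∀ x, d * (1 + z.re * ‖wl x ^ (-(α : ℂ))‖) ≤ ‖1 + z * wl x ^ (-(α : ℂ))‖ :=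
    fun z hz x => sector_bound c hc0 hc1 _ z (hc x) hz
  have hne : ∀ z ∈ U, ∀ x, 1 + z * wl x ^ (-(α : ℂ)) ≠ 0 := by
    intro z hz x
    have h1 := hlow z hz x
    have h2 := hpos z hz
    rw [← norm_pos_iff]
    exact lt_of_lt_of_le (by positivity) h1
  have hα := wl_cpow_cont (-(α : ℂ))
  have hβ := wl_cpow_cont (-(b : ℂ))
  have hw := wl_cont
  have hdiff : DifferentiableOn ℂ (fun z => ∫ x, Complex.exp (wl x) * wl x ^ (-(b : ℂ)) /
      (1 + z * wl x ^ (-(α : ℂ)))) U := by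
    refine holo_int hU _ (fun x => Real.exp 1 * ‖wl x‖ ^ (-b) / d) ?_ ?_
      (((wl_integrable b (by linarith)).const_mul _).div_const _) ?_
    · intro z hz
      exact (Continuous.div (by fun_prop) (by fun_prop) (hne z hz)).aestronglyMeasurable
    · refine Eventually.of_forall fun x => ?_
      exact DifferentiableOn.div (by fun_prop) (by fun_prop) (fun z hz => hne z hz x)
    · refine Eventually.of_forall fun x z hz => ?_
      rw [norm_div, norm_mul, wl_exp_norm, ← Complex.ofReal_neg, Complex.norm_cpow_real]
      gcongr
      refine le_trans ?_ (hlow z hz x)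
      have := hpos z hz
      have : 0 ≤ z.re * ‖wl x ^ (-(α : ℂ))‖ := by positivity
      nlinarith
  have hrep : ∀ z ∈ U, ∫ x, Complex.exp (wl x) * wl x ^ (-(b : ℂ)) /
      (1 + z * wl x ^ (-(α : ℂ))) = cML α b (-z) := by
    have hmem : (1 / 2 : ℂ) ∈ U := by
      change |(1 / 2 : ℂ).im| < d * (1 / 2 : ℂ).re
      norm_num
      exact hd
    refine (hdiff.analyticOnNhd hU).eqOn_of_preconnected_of_eventuallyEq
      (g := fun z => cML α b (-z)) (DifferentiableOn.analyticOnNhd ?_ hU) hconv.isPreconnected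
      hmem ?_
    · exact ((cML_differentiable α b hα1).comp differentiable_neg).differentiableOn
    · filter_upwards [Metric.isOpen_ball.mem_nhds
        (show (1 / 2 : ℂ) ∈ Metric.ball (0:ℂ) 1 by simp; norm_num)] with z hz
      exact cML_rep_small α b hα1 (by linarith) z (by simpa using hz)
  have hI := (((wl_integrable (b - α) (by linarith)).const_mul (Real.exp 1)).div_const d)
  refine ⟨d, hd, by rw [hdd]; linarith, ∫ x, Real.exp 1 * ‖wl x‖ ^ (-(b - α)) / d,
    integral_nonneg fun x => by positivity, fun z hz => ?_⟩
  have hzp := hpos z hz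
  rw [← hrep z hz, ← integral_div]
  refine norm_integral_le_of_norm_le (hI.div_const _) (Eventually.of_forall fun x => ?_)
  have hwp : 0 < ‖wl x‖ := norm_pos_iff.2 (wl_ne x)
  have hl := hlow z hz x
  rw [norm_div, norm_mul, wl_exp_norm, ← Complex.ofReal_neg b, Complex.norm_cpow_real]
  rw [← Complex.ofReal_neg, Complex.norm_cpow_real] at hl
  have hl2 : d * (z.re * ‖wl x‖ ^ (-α)) ≤ ‖1 + z * wl x ^ ((-α : ℝ) : ℂ)‖ := by
    refine le_trans ?_ hl
    gcongr
    linarith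
  rw [← Complex.ofReal_neg]
  calc _ ≤ Real.exp 1 * ‖wl x‖ ^ (-b) / (d * (z.re * ‖wl x‖ ^ (-α))) := by gcongr
    _ = _ := by
      have : ‖wl x‖ ^ (-b) = ‖wl x‖ ^ (-(b - α)) * ‖wl x‖ ^ (-α) := by
        rw [← Real.rpow_add hwp]; congr 1; ring
      rw [this]
      field_simp

/-- Let `α ∈ (1,2)` and `β > 0`. There exists a constant
`C = C(α,β) > 0` such that `|E_{α,β}(−μ)| ≤ C/(1+μ)` for every `μ ≥ 0`. -/
theorem mittagLeffler_decay (α β : ℝ) (hα1 : 1 < α) (hα2 : α < 2) (hβ : 0 < β) :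
    ∃ C > 0, ∀ μ : ℝ, 0 ≤ μ → |mittagLeffler α β (-μ)| ≤ C / (1 + μ) := by
  exact final_of_secDecay α β hα1
    (secDecay_of_large α β hα1 hβ fun b hb => secDecay_large α b hα1 hα2 hb)
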